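/- arXiv:1105.5106 — 2 statements merged into one kernel-verified Lean document; each statement's English description precedes it below -/
import Mathlib

section
/- Fix an integer n ≥ 5 and let B_n be the set of subsets T of {1, …, n−1} with 1 ≤ |T| ≤ n−3. In the ℚ-vector space ℚ^{B_n} of functions B_n → ℚ with standard basis (e_T), set h_{ab} = ∑_{T ∈ B_n, T ∩ {a,b} = ∅} e_T for distinct a, b ∈ {1, …, n−1}. Define r_{ax} = h_{ax} − h_{12} for each a ∈ {1, 2} and x ∈ {3, …, n−1}, and r_{yz} = h_{yz} − h_{12} for each 2-element subset {y, z} of {3, …, n−1}. Then these 2(n−3) + C(n−3, 2) = C(n, 2) − n vectors are linearly independent in ℚ^{B_n}. -/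
/-- `B_n`: the set of subsets `T` of `{1,…,n-1}` with `1 ≤ |T| ≤ n-3`
(indexing the boundary divisors `Δ_{T ∪ {n}}` of `M̄_{0,n}`). -/
abbrev Bn (n : ℕ) :=
  {T : Finset ℕ // T ⊆ Finset.Icc 1 (n - 1) ∧ 1 ≤ T.card ∧ T.card ≤ n - 3}

/-- `h_{ab} = ∑_{T ∈ B_n, T ∩ {a,b} = ∅} e_T ∈ ℚ^{B_n}`, written in coordinates. -/
def hvec (n a b : ℕ) : Bn n → ℚ :=
  fun T => if (T : Finset ℕ) ∩ {a, b} = ∅ then 1 else 0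

/-!
The coordinate of `h_{cd}` at the complement of `{a, b}` in `{1, …, n-1}` is `1` if
`{c, d} = {a, b}` and `0` otherwise. So these coordinates are a dual system for all the `h_{ab}`,
which are therefore linearly independent; hence so are their differences with the fixed `h_{12}`.
-/

theorem linearIndependent_comp_sub {R M ι κ : Type*} [Ring R] [AddCommGroup M] [Module R M]
    {v : ι → M} (hv : LinearIndependent R v) {f : κ → ι} (hf : f.Injective) {i₀ : ι}
    (hi₀ : ∀ j, f j ≠ i₀) : LinearIndependent R fun j => v (f j) - v i₀ :=
  ((affineIndependent_iff_linearIndependent_vsub R v i₀).1 hv.affineIndependent).comp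
    (fun j => ⟨f j, hi₀ j⟩) fun _ _ h => hf (congrArg Subtype.val h)

theorem pair_subset_pair_iff_of_lt {α : Type*} [LinearOrder α] {a b c d : α} (hab : a < b)
    (hcd : c < d) : ({c, d} : Finset α) ⊆ {a, b} ↔ c = a ∧ d = b := by
  simp only [Finset.insert_subset_iff, Finset.singleton_subset_iff, Finset.mem_insert,
    Finset.mem_singleton]
  grind

/-- The 2-element subsets `{a, b}` of `{1, …, n-1}`, encoded as ordered pairs with `a < b`: the
index set of the vectors `h_{ab}`. -/
abbrev IncreasingPair (n : ℕ) :=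
  {p : ℕ × ℕ // p.1 ∈ Finset.Icc 1 (n - 1) ∧ p.2 ∈ Finset.Icc 1 (n - 1) ∧ p.1 < p.2}

namespace IncreasingPair

variable {n : ℕ}

theorem pair_subset_Icc (p : IncreasingPair n) : {p.1.1, p.1.2} ⊆ Finset.Icc 1 (n - 1) :=
  Finset.insert_subset p.2.1 (Finset.singleton_subset_iff.2 p.2.2.1)

theorem card_Icc_sdiff_pair (p : IncreasingPair n) :
    (Finset.Icc 1 (n - 1) \ {p.1.1, p.1.2}).card = n - 3 := by
  rw [Finset.card_sdiff_of_subset p.pair_subset_Icc, Finset.card_pair p.2.2.2.ne, Nat.card_Icc]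
  lia

/-- The complement of `{a, b}` in `{1, …, n-1}`, as an element of `B_n`; it is nonempty because
`4 ≤ n`. -/
def compl (hn : 4 ≤ n) (p : IncreasingPair n) : Bn n :=
  ⟨Finset.Icc 1 (n - 1) \ {p.1.1, p.1.2}, Finset.sdiff_subset,
    by rw [p.card_Icc_sdiff_pair]; lia, p.card_Icc_sdiff_pair.le⟩

theorem hvec_compl (hn : 4 ≤ n) (p q : IncreasingPair n) :
    hvec n q.1.1 q.1.2 (p.compl hn) = if q = p then 1 else 0 := by
  have disjoint_iff :
      (Finset.Icc 1 (n - 1) \ {p.1.1, p.1.2}) ∩ {q.1.1, q.1.2} = ∅ ↔ q = p := by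
    rw [Finset.sdiff_inter_right_comm, Finset.inter_eq_right.2 q.pair_subset_Icc,
      Finset.sdiff_eq_empty_iff_subset, pair_subset_pair_iff_of_lt p.2.2.2 q.2.2.2,
      Subtype.ext_iff, Prod.ext_iff]
  simp only [hvec, compl, disjoint_iff]

end IncreasingPair

theorem linearIndependent_hvec {n : ℕ} (hn : 4 ≤ n) :
    LinearIndependent ℚ fun p : IncreasingPair n => hvec n p.1.1 p.1.2 := by
  refine .of_pairwise_dual_eq_zero_one _ (fun p => LinearMap.proj (p.compl hn)) ?_ ?_
  · intro p q hpq
    exact (p.hvec_compl hn q).trans (if_neg hpq.symm)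
  · intro p
    exact (p.hvec_compl hn p).trans (if_pos rfl)

/-- The vectors `r_{ax} = h_{ax} - h_{12}` for `a ∈ {1,2}`, `x ∈ {3,…,n-1}`, together
with `r_{yz} = h_{yz} - h_{12}` for 2-element subsets `{y,z}` of `{3,…,n-1}`, are
linearly independent in `ℚ^{B_n}`. -/
theorem kernel_vectors_linearIndependent (n : ℕ) (hn : 5 ≤ n) :
    LinearIndependent ℚ
      (fun p : {p : ℕ × ℕ //
          (p.1 ∈ ({1, 2} : Finset ℕ) ∧ p.2 ∈ Finset.Icc 3 (n - 1)) ∨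
          (p.1 ∈ Finset.Icc 3 (n - 1) ∧ p.2 ∈ Finset.Icc 3 (n - 1) ∧ p.1 < p.2)} =>
        hvec n p.1.1 p.1.2 - hvec n 1 2) := by
  have hlt : ∀ p : ℕ × ℕ, (p.1 ∈ ({1, 2} : Finset ℕ) ∧ p.2 ∈ Finset.Icc 3 (n - 1)) ∨
      (p.1 ∈ Finset.Icc 3 (n - 1) ∧ p.2 ∈ Finset.Icc 3 (n - 1) ∧ p.1 < p.2) →
      p.1 ∈ Finset.Icc 1 (n - 1) ∧ p.2 ∈ Finset.Icc 1 (n - 1) ∧ p.1 < p.2 := by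
    simp only [Finset.mem_insert, Finset.mem_singleton, Finset.mem_Icc]
    lia
  let base : IncreasingPair n := ⟨(1, 2), by simp only [Finset.mem_Icc]; lia⟩
  refine linearIndependent_comp_sub (linearIndependent_hvec (by lia : 4 ≤ n))
    (Subtype.impEmbedding _ _ hlt).injective (i₀ := base) fun p hp => ?_
  have hp12 : p.1 = (1, 2) := congrArg Subtype.val hp
  simpa [hp12] using p.2
end

section
/- Fix an integer n ≥ 5 and let B_n be the set of subsets T of {1, …, n−1} with 1 ≤ |T| ≤ n−3. In the ℚ-vector space ℚ^{B_n} of functions B_n → ℚ with standard basis (e_T), set h_{ab} = ∑_{T ∈ B_n, T ∩ {a,b} = ∅} e_T for distinct a, b ∈ {1, …, n−1}, and let K ⊆ ℚ^{B_n} be the ℚ-linear span of the vectors h_{ax} − h_{12} for a ∈ {1, 2}, x ∈ {3, …, n−1}, together with h_{yz} − h_{12} for 2-element subsets {y, z} of {3, …, n−1}. Let J be a subset of {3, …, n−1} with 0 ≤ |J| ≤ n−4 and set f_J = h_{12} − ∑_{T ⊆ J, T ≠ ∅} e_T. Then the set of functions d : B_n → ℕ whose image in ℚ^{B_n} satisfies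 d − f_J ∈ K is exactly the set { h_{ab} − ∑_{T ⊆ J, T ≠ ∅} e_T : {a, b} a 2-element subset of {1, …, n−1} ∖ J } (in particular each of these vectors has nonnegative integer coordinates). -/
/-- `∑_{T ⊆ J, T ≠ ∅} e_T ∈ ℚ^{B_n}`, written in coordinates. -/
def svec (n : ℕ) (J : Finset ℕ) : Bn n → ℚ :=
  fun T => if (T : Finset ℕ) ⊆ J ∧ (T : Finset ℕ).Nonempty then 1 else 0

/-- `K ⊆ ℚ^{B_n}`: the span of `h_{ax} - h_{12}` for `a ∈ {1,2}`, `x ∈ {3,…,n-1}`,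
and `h_{yz} - h_{12}` for 2-element subsets `{y,z}` of `{3,…,n-1}`. -/
def Kker (n : ℕ) : Submodule ℚ (Bn n → ℚ) :=
  Submodule.span ℚ
    ({v | ∃ a x, a ∈ ({1, 2} : Finset ℕ) ∧ x ∈ Finset.Icc 3 (n - 1) ∧
        v = hvec n a x - hvec n 1 2} ∪
      {v | ∃ y z, y ∈ Finset.Icc 3 (n - 1) ∧ z ∈ Finset.Icc 3 (n - 1) ∧ y < z ∧
        v = hvec n y z - hvec n 1 2})

/-!
Coordinates at the complements `pᶜ` of pairs form a dual system for the vectors `h_p`, because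
`pᶜ ∩ q = ∅` exactly when `p = q`. As `h_{12} + K` is the affine span of all the `h_p`, each of its
elements `u` is `∑ u(pᶜ) h_p` with `∑ u(pᶜ) = 1`; if these coordinates are natural numbers,
exactly one of them is `1` and `u` is a single `h_p`. This applies to
`u = d + ∑_{∅ ≠ T ⊆ J} e_T`, and the coordinates of `d` at singletons force `p` to avoid `J`.
-/

theorem exists_eq_one_of_sum_eq_one {ι : Type*} {s : Finset ι} {k : ι → ℕ}
    (hk : ∑ i ∈ s, k i = 1) : ∃ i ∈ s, k i = 1 ∧ ∀ j ∈ s, j ≠ i → k j = 0 := by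
  classical
  obtain ⟨i, hi, hki⟩ := Finset.exists_ne_zero_of_sum_ne_zero (hk.trans_ne one_ne_zero)
  have hsplit := Finset.add_sum_erase s k hi
  have hrest : ∑ j ∈ s.erase i, k j = 0 := by lia
  exact ⟨i, hi, by lia, fun j hj hji ↦
    Finset.sum_eq_zero_iff.1 hrest j (Finset.mem_erase.2 ⟨hji, hj⟩)⟩

section DualCoordinates

variable {R ι α : Type*} [Ring R] [DecidableEq ι] {h : ι → α → R} {c : ι → α} {u : α → R}

theorem exists_sum_coords_eq_one_of_mem_affineSpan
    (hdual : ∀ i j, h i (c j) = if i = j then 1 else 0)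
    (hu : u ∈ affineSpan R (Set.range h)) :
    ∃ s : Finset ι, ∑ i ∈ s, u (c i) = 1 ∧ u = ∑ i ∈ s, u (c i) • h i := by
  obtain ⟨s, w, hw, hcomb⟩ := eq_affineCombination_of_mem_affineSpan hu
  rw [s.affineCombination_eq_linear_combination h w hw] at hcomb
  have hcoord : ∀ i ∈ s, u (c i) = w i := fun i hi ↦ by simp [hcomb, hdual, hi]
  refine ⟨s, (Finset.sum_congr rfl hcoord).trans hw, hcomb.trans ?_⟩
  exact Finset.sum_congr rfl fun i hi ↦ by rw [hcoord i hi]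

theorem mem_range_of_mem_affineSpan_of_natCast_coords [CharZero R]
    (hdual : ∀ i j, h i (c j) = if i = j then 1 else 0)
    (hu : u ∈ affineSpan R (Set.range h)) (hnat : ∀ i, ∃ k : ℕ, u (c i) = k) :
    u ∈ Set.range h := by
  obtain ⟨s, hsum, hcomb⟩ := exists_sum_coords_eq_one_of_mem_affineSpan hdual hu
  choose k hk using hnat
  simp only [hk] at hsum hcomb
  obtain ⟨i, hi, hone, hzero⟩ := exists_eq_one_of_sum_eq_one (s := s) (k := k) (mod_cast hsum)
  refine ⟨i, ?_⟩
  rw [hcomb, Finset.sum_eq_single_of_mem i hi fun j hj hji ↦ by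
    rw [hzero j hj hji, Nat.cast_zero, zero_smul], hone, Nat.cast_one, one_smul]

end DualCoordinates

/-- The 2-element subsets of `{1,…,n-1}`, which index the vectors `h_{ab}`. -/
abbrev MarkedPair (n : ℕ) := {p : Finset ℕ // p ∈ Finset.powersetCard 2 (Finset.Icc 1 (n - 1))}

/-- `h_p` for an unordered pair `p`; on `p = {a, b}` it is `hvec n a b`. -/
def pairVec (n : ℕ) (p : MarkedPair n) : Bn n → ℚ :=
  fun T ↦ if (T : Finset ℕ) ∩ p = ∅ then 1 else 0

/-- The complement of a pair in `{1,…,n-1}`, a maximal element of `B_n`. The coordinates at these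
elements are dual to the vectors `h_p`. -/
def pairCompl {n : ℕ} (hn : 4 ≤ n) (p : MarkedPair n) : Bn n :=
  ⟨Finset.Icc 1 (n - 1) \ p, by
    obtain ⟨hsub, hcard⟩ := Finset.mem_powersetCard.1 p.2
    have hcompl := Finset.card_sdiff_of_subset hsub
    rw [Nat.card_Icc] at hcompl
    exact ⟨Finset.sdiff_subset, by lia, by lia⟩⟩

/-- The singleton `{x}` as an element of `B_n`. -/
def singletonBn {n : ℕ} (hn : 4 ≤ n) {x : ℕ} (hx : x ∈ Finset.Icc 1 (n - 1)) : Bn n :=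
  ⟨{x}, Finset.singleton_subset_iff.2 hx, (Finset.card_singleton x).ge, by
    rw [Finset.card_singleton]; lia⟩

theorem pairVec_pairCompl {n : ℕ} (hn : 4 ≤ n) (p q : MarkedPair n) :
    pairVec n p (pairCompl hn q) = if p = q then 1 else 0 := by
  obtain ⟨hp, hp2⟩ := Finset.mem_powersetCard.1 p.2
  obtain ⟨-, hq2⟩ := Finset.mem_powersetCard.1 q.2
  have hdisj : Finset.Icc 1 (n - 1) \ (q : Finset ℕ) ∩ p = ∅ ↔ (p : Finset ℕ) ⊆ q := by
    rw [Finset.inter_comm, ← Finset.inter_sdiff_assoc, Finset.inter_eq_left.2 hp,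
      Finset.sdiff_eq_empty_iff_subset]
  have heq : (p : Finset ℕ) ⊆ q ↔ p = q :=
    ⟨fun hpq ↦ Subtype.ext (Finset.eq_of_subset_of_card_le hpq (hq2.trans hp2.symm).le),
      fun hpq ↦ hpq ▸ subset_rfl⟩
  exact if_congr (hdisj.trans heq) rfl rfl

theorem hvec_comm (n a b : ℕ) : hvec n a b = hvec n b a := by
  unfold hvec
  rw [Finset.pair_comm]

theorem mem_range_pairVec {n : ℕ} {u : Bn n → ℚ} :
    u ∈ Set.range (pairVec n) ↔
      ∃ a b, a ∈ Finset.Icc 1 (n - 1) ∧ b ∈ Finset.Icc 1 (n - 1) ∧ a ≠ b ∧ u = hvec n a b := by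
  constructor
  · rintro ⟨⟨p, hp⟩, rfl⟩
    obtain ⟨hsub, hcard⟩ := Finset.mem_powersetCard.1 hp
    obtain ⟨a, b, hab, rfl⟩ := Finset.card_eq_two.1 hcard
    rw [Finset.insert_subset_iff, Finset.singleton_subset_iff] at hsub
    exact ⟨a, b, hsub.1, hsub.2, hab, rfl⟩
  · rintro ⟨a, b, ha, hb, hab, rfl⟩
    have hpair : {a, b} ∈ Finset.powersetCard 2 (Finset.Icc 1 (n - 1)) :=
      Finset.mem_powersetCard.2
        ⟨Finset.insert_subset ha (Finset.singleton_subset_iff.2 hb), Finset.card_pair hab⟩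
    exact ⟨⟨{a, b}, hpair⟩, rfl⟩

theorem hvec_mem_range_pairVec {n a b : ℕ} (ha : a ∈ Finset.Icc 1 (n - 1))
    (hb : b ∈ Finset.Icc 1 (n - 1)) (hab : a ≠ b) : hvec n a b ∈ Set.range (pairVec n) :=
  mem_range_pairVec.2 ⟨a, b, ha, hb, hab, rfl⟩

theorem hvec_one_two_mem_range_pairVec {n : ℕ} (hn : 3 ≤ n) :
    hvec n 1 2 ∈ Set.range (pairVec n) :=
  hvec_mem_range_pairVec (Finset.mem_Icc.2 (by lia)) (Finset.mem_Icc.2 (by lia)) (by lia)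

theorem hvec_sub_hvec_one_two_mem_Kker {n a b : ℕ} (ha : a ∈ Finset.Icc 1 (n - 1))
    (hb : b ∈ Finset.Icc 1 (n - 1)) (hab : a ≠ b) : hvec n a b - hvec n 1 2 ∈ Kker n := by
  wlog hlt : a < b generalizing a b
  · rw [hvec_comm]
    exact this hb ha hab.symm (by lia)
  rw [Finset.mem_Icc] at ha hb
  obtain ⟨rfl, rfl⟩ | ⟨ha2, hb3⟩ | ha3 : (a = 1 ∧ b = 2) ∨ (a ≤ 2 ∧ 3 ≤ b) ∨ 3 ≤ a := by lia
  · rw [sub_self]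
    exact zero_mem _
  · have ha12 : a ∈ ({1, 2} : Finset ℕ) := by
      rw [Finset.mem_insert, Finset.mem_singleton]; lia
    exact Submodule.subset_span (.inl ⟨a, b, ha12, Finset.mem_Icc.2 ⟨hb3, hb.2⟩, rfl⟩)
  · exact Submodule.subset_span
      (.inr ⟨a, b, Finset.mem_Icc.2 ⟨ha3, ha.2⟩, Finset.mem_Icc.2 (by lia), hlt, rfl⟩)

theorem Kker_eq_vectorSpan {n : ℕ} (hn : 3 ≤ n) :
    Kker n = vectorSpan ℚ (Set.range (pairVec n)) := by
  have h12 := hvec_one_two_mem_range_pairVec hn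
  apply le_antisymm
  · refine Submodule.span_le.2 ?_
    rintro _ (⟨a, x, ha, hx, rfl⟩ | ⟨y, z, hy, hz, hyz, rfl⟩)
    · simp only [Finset.mem_insert, Finset.mem_singleton, Finset.mem_Icc] at ha hx
      exact vsub_mem_vectorSpan ℚ (hvec_mem_range_pairVec (Finset.mem_Icc.2 (by lia))
        (Finset.mem_Icc.2 (by lia)) (by lia)) h12
    · simp only [Finset.mem_Icc] at hy hz
      exact vsub_mem_vectorSpan ℚ (hvec_mem_range_pairVec (Finset.mem_Icc.2 (by lia))
        (Finset.mem_Icc.2 (by lia)) hyz.ne) h12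
  · rw [vectorSpan_eq_span_vsub_set_right ℚ h12, Submodule.span_le]
    rintro _ ⟨u, hu, rfl⟩
    obtain ⟨a, b, ha, hb, hab, rfl⟩ := mem_range_pairVec.1 hu
    exact hvec_sub_hvec_one_two_mem_Kker ha hb hab

theorem sub_hvec_one_two_mem_Kker_iff {n : ℕ} (hn : 3 ≤ n) {u : Bn n → ℚ} :
    u - hvec n 1 2 ∈ Kker n ↔ u ∈ affineSpan ℚ (Set.range (pairVec n)) := by
  rw [Kker_eq_vectorSpan hn, ← direction_affineSpan]
  exact AffineSubspace.vsub_right_mem_direction_iff_mem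
    (subset_affineSpan ℚ _ (hvec_one_two_mem_range_pairVec hn)) u

/-- The vectors in the image of `ℕ^{B_n} → ℚ^{B_n}`, i.e. the effective integral sums of boundary
divisors. -/
def IsEffective {n : ℕ} (v : Bn n → ℚ) : Prop :=
  ∃ d : Bn n → ℕ, ∀ T, v T = (d T : ℚ)

theorem IsEffective.add {n : ℕ} {v w : Bn n → ℚ} (hv : IsEffective v) (hw : IsEffective w) :
    IsEffective (v + w) := by
  obtain ⟨d, hd⟩ := hv
  obtain ⟨e, he⟩ := hw
  exact ⟨d + e, fun T ↦ by simp only [Pi.add_apply, hd, he, Nat.cast_add]⟩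

theorem isEffective_svec (n : ℕ) (J : Finset ℕ) : IsEffective (svec n J) :=
  ⟨fun T ↦ if (T : Finset ℕ) ⊆ J ∧ (T : Finset ℕ).Nonempty then 1 else 0,
    fun _ ↦ by simp only [svec, Nat.cast_ite, Nat.cast_one, Nat.cast_zero]⟩

theorem IsEffective.mem_affineSpan_pairVec_iff {n : ℕ} (hn : 4 ≤ n) {u : Bn n → ℚ}
    (hu : IsEffective u) :
    u ∈ affineSpan ℚ (Set.range (pairVec n)) ↔ u ∈ Set.range (pairVec n) := by
  obtain ⟨d, hd⟩ := hu
  exact ⟨fun hspan ↦ mem_range_of_mem_affineSpan_of_natCast_coords (pairVec_pairCompl hn) hspan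
    fun p ↦ ⟨d (pairCompl hn p), hd _⟩, fun hrange ↦ subset_affineSpan ℚ _ hrange⟩

theorem notMem_of_isEffective_hvec_sub_svec {n a b x : ℕ} {J : Finset ℕ} (hn : 4 ≤ n)
    (hx : x ∈ Finset.Icc 1 (n - 1)) (hxab : x ∈ ({a, b} : Finset ℕ))
    (heff : IsEffective (hvec n a b - svec n J)) : x ∉ J := by
  intro hxJ
  obtain ⟨d, hd⟩ := heff
  have hh : hvec n a b (singletonBn hn hx) = 0 := if_neg <| by
    simp only [singletonBn, Finset.singleton_inter_of_mem hxab, Finset.singleton_ne_empty,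
      not_false_eq_true]
  have hs : svec n J (singletonBn hn hx) = 1 :=
    if_pos ⟨Finset.singleton_subset_iff.2 hxJ, Finset.singleton_nonempty x⟩
  have hneg := hd (singletonBn hn hx)
  rw [Pi.sub_apply, hh, hs] at hneg
  linarith [(d (singletonBn hn hx)).cast_nonneg (α := ℚ)]

theorem isEffective_hvec_sub_svec {n a b : ℕ} {J : Finset ℕ} (ha : a ∉ J) (hb : b ∉ J) :
    IsEffective (hvec n a b - svec n J) := by
  have hcoord : ∀ T, ∃ k : ℕ, (hvec n a b - svec n J) T = k := by
    intro T
    rw [Pi.sub_apply, hvec, svec]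
    by_cases hT : (T : Finset ℕ) ⊆ J ∧ (T : Finset ℕ).Nonempty
    · have hab : (T : Finset ℕ) ∩ {a, b} = ∅ := by
        rw [← Finset.disjoint_iff_inter_eq_empty, Finset.disjoint_insert_right,
          Finset.disjoint_singleton_right]
        exact ⟨fun h ↦ ha (hT.1 h), fun h ↦ hb (hT.1 h)⟩
      exact ⟨0, by rw [if_pos hT, if_pos hab, sub_self, Nat.cast_zero]⟩
    · exact ⟨if (T : Finset ℕ) ∩ {a, b} = ∅ then 1 else 0, by
        rw [if_neg hT, sub_zero, Nat.cast_ite, Nat.cast_one, Nat.cast_zero]⟩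
  exact Classical.skolem.1 hcoord

theorem IsEffective.sub_mem_Kker_iff {n : ℕ} (hn : 4 ≤ n) (J : Finset ℕ) {v : Bn n → ℚ}
    (hv : IsEffective v) :
    v - (hvec n 1 2 - svec n J) ∈ Kker n ↔
      ∃ a b, a ∈ Finset.Icc 1 (n - 1) ∧ b ∈ Finset.Icc 1 (n - 1) ∧ a ≠ b ∧
        v = hvec n a b - svec n J := by
  rw [← sub_add, sub_add_eq_add_sub, sub_hvec_one_two_mem_Kker_iff (by lia),
    (hv.add (isEffective_svec n J)).mem_affineSpan_pairVec_iff hn, mem_range_pairVec]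
  simp only [eq_sub_iff_add_eq]

theorem effective_representatives_of_FJn_general (n : ℕ) (hn : 4 ≤ n) (J : Finset ℕ) :
    {v : Bn n → ℚ | (∃ d : Bn n → ℕ, ∀ T, v T = (d T : ℚ)) ∧
        v - (hvec n 1 2 - svec n J) ∈ Kker n} =
      {v : Bn n → ℚ | ∃ a b, a ∈ Finset.Icc 1 (n - 1) \ J ∧
        b ∈ Finset.Icc 1 (n - 1) \ J ∧ a ≠ b ∧ v = hvec n a b - svec n J} := by
  ext v
  constructor
  · rintro ⟨heff : IsEffective v, hK⟩
    obtain ⟨a, b, ha, hb, hab, rfl⟩ := (heff.sub_mem_Kker_iff hn J).1 hK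
    have haJ : a ∉ J := notMem_of_isEffective_hvec_sub_svec hn ha (by simp) heff
    have hbJ : b ∉ J := notMem_of_isEffective_hvec_sub_svec hn hb (by simp) heff
    exact ⟨a, b, Finset.mem_sdiff.2 ⟨ha, haJ⟩, Finset.mem_sdiff.2 ⟨hb, hbJ⟩, hab, rfl⟩
  · rintro ⟨a, b, ha, hb, hab, rfl⟩
    rw [Finset.mem_sdiff] at ha hb
    have heff : IsEffective (hvec n a b - svec n J) := isEffective_hvec_sub_svec ha.2 hb.2
    exact ⟨heff, (heff.sub_mem_Kker_iff hn J).2 ⟨a, b, ha.1, hb.1, hab, rfl⟩⟩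

/-- For `J ⊆ {3,…,n-1}` with `|J| ≤ n-4` and `f_J = h_{12} - ∑_{∅ ≠ T ⊆ J} e_T`, the
set of `ℕ`-valued vectors `d` with `d - f_J ∈ K` is exactly
`{h_{ab} - ∑_{∅ ≠ T ⊆ J} e_T : {a,b} a 2-element subset of {1,…,n-1} ∖ J}`. -/
theorem effective_representatives_of_FJn (n : ℕ) (hn : 5 ≤ n)
    (J : Finset ℕ) (hJ : J ⊆ Finset.Icc 3 (n - 1)) (hJc : J.card ≤ n - 4) :
    {v : Bn n → ℚ | (∃ d : Bn n → ℕ, ∀ T, v T = (d T : ℚ)) ∧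
        v - (hvec n 1 2 - svec n J) ∈ Kker n} =
      {v : Bn n → ℚ | ∃ a b, a ∈ Finset.Icc 1 (n - 1) \ J ∧
        b ∈ Finset.Icc 1 (n - 1) \ J ∧ a ≠ b ∧ v = hvec n a b - svec n J} :=
  effective_representatives_of_FJn_general n (by lia) J
end
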